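/- arXiv:1606.09131 — 2 statements merged into one kernel-verified Lean document; each statement's English description precedes it below -/
import Mathlib

section
/- Monotonicity of the uplink interference function: Under the C-RAN setup with h_k ≠ 0 and target rate R_k > 0 for each user k, if p, p' ∈ ℝ^K are nonnegative power vectors with p_i ≥ p'_i for every i, then Γ_k(p) ≥ Γ_k(p') for every k. -/
open Finset Matrix ComplexOrder

noncomputable section

namespace CRAN

variable {M K : ℕ}

/-- The channel vector `h_k = (h_{1,k}, …, h_{M,k}) ∈ ℂ^M` of user `k`. -/
def chanVec (h : Fin M → Fin K → ℂ) (k : Fin K) : Fin M → ℂ := fun m => h m k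

/-- Quantization noise diagonal matrix `Q(p) = Diag(q_1(p),…,q_M(p))` with
`q_m(p) = (Σ_i p_i |h_{m,i}|² + σ²)/η_m` and `η_m = 2^{C_m} − 1`. -/
def Qmat (h : Fin M → Fin K → ℂ) (σ2 : ℝ) (C : Fin M → ℝ) (p : Fin K → ℝ) :
    Matrix (Fin M) (Fin M) ℂ :=
  Matrix.diagonal fun m =>
    (((∑ i, p i * ‖h m i‖ ^ 2 + σ2) / ((2 : ℝ) ^ (C m) - 1) : ℝ) : ℂ)

/-- Interference-plus-quantization-plus-noise covariance matrix
`Σ_{j≠k} p_j h_j h_jᴴ + Q(p) + σ² I` for user `k`. -/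
def covMat (h : Fin M → Fin K → ℂ) (σ2 : ℝ) (C : Fin M → ℝ) (p : Fin K → ℝ)
    (k : Fin K) : Matrix (Fin M) (Fin M) ℂ :=
  (∑ j ∈ univ.erase k, (p j : ℂ) • Matrix.vecMulVec (chanVec h j) (star (chanVec h j)))
    + Qmat h σ2 C p + (σ2 : ℂ) • 1

/-- The uplink interference function
`Γ_k(p) = (2^{R_k} − 1) / (h_kᴴ (Σ_{j≠k} p_j h_j h_jᴴ + Q(p) + σ²I)⁻¹ h_k)`,
where the (real, positive) denominator is taken as the real part of the quadratic
form. -/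
def Gam (h : Fin M → Fin K → ℂ) (σ2 : ℝ) (C : Fin M → ℝ) (R : Fin K → ℝ)
    (p : Fin K → ℝ) (k : Fin K) : ℝ :=
  ((2 : ℝ) ^ (R k) - 1) /
    (star (chanVec h k) ⬝ᵥ ((covMat h σ2 C p k)⁻¹ *ᵥ chanVec h k)).re

theorem posSemidef_inv_sub_inv {n : ℕ} {A D : Matrix (Fin n) (Fin n) ℂ} (hA : A.PosDef)
    (hD : D.PosSemidef) : (A⁻¹ - (A + D)⁻¹).PosSemidef := by
  have hB : (A + D).PosDef := hA.add_posSemidef hD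
  have hBi := hB.inv.isHermitian
  have uA : IsUnit A.det := (Matrix.isUnit_iff_isUnit_det _).1 hA.isUnit
  have uB : IsUnit (A + D).det := (Matrix.isUnit_iff_isUnit_det _).1 hB.isUnit
  have e1 : A⁻¹ - (A + D)⁻¹ = A⁻¹ * D * (A + D)⁻¹ := by
    calc A⁻¹ - (A + D)⁻¹ = A⁻¹ * ((A + D) * (A + D)⁻¹) - (A⁻¹ * A) * (A + D)⁻¹ := by
          rw [Matrix.mul_nonsing_inv _ uB, Matrix.nonsing_inv_mul _ uA]; simp
      _ = _ := by noncomm_ring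
  have e2 : A⁻¹ - (A + D)⁻¹ = (A + D)⁻¹ * D * A⁻¹ := by
    calc A⁻¹ - (A + D)⁻¹ = ((A + D)⁻¹ * (A + D)) * A⁻¹ - (A + D)⁻¹ * (A * A⁻¹) := by
          rw [Matrix.nonsing_inv_mul _ uB, Matrix.mul_nonsing_inv _ uA]; simp
      _ = _ := by noncomm_ring
  have e3 : A⁻¹ - (A + D)⁻¹ = ((A + D)⁻¹)ᴴ * D * (A + D)⁻¹
      + (D * (A + D)⁻¹)ᴴ * A⁻¹ * (D * (A + D)⁻¹) := by
    rw [Matrix.conjTranspose_mul, hBi.eq, hD.isHermitian.eq]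
    have h2 : A⁻¹ = (A + D)⁻¹ + (A + D)⁻¹ * D * A⁻¹ := by rw [← e2]; abel
    rw [e1]
    conv_lhs => rw [h2]
    noncomm_ring
  rw [e3]
  exact (hD.conjTranspose_mul_mul_same _).add (hA.inv.posSemidef.conjTranspose_mul_mul_same _)

theorem eta_pos {c : ℝ} (hc : 0 < c) : 0 < (2 : ℝ) ^ c - 1 :=
  sub_pos.2 (Real.one_lt_rpow (by norm_num) hc)

theorem sum_posSemidef {M K : ℕ} (h : Fin M → Fin K → ℂ) (p : Fin K → ℝ) (hp : ∀ i, 0 ≤ p i)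
    (k : Fin K) : (∑ j ∈ univ.erase k,
      (p j : ℂ) • Matrix.vecMulVec (chanVec h j) (star (chanVec h j))).PosSemidef := by
  refine Matrix.posSemidef_sum _ fun j _ => ?_
  exact (Matrix.posSemidef_vecMulVec_self_star _).smul (by exact_mod_cast hp j)

theorem covMat_posDef {M K : ℕ} (h : Fin M → Fin K → ℂ) (σ2 : ℝ) (hσ : 0 < σ2)
    (C : Fin M → ℝ) (hC : ∀ m, 0 < C m) (p : Fin K → ℝ) (hp : ∀ i, 0 ≤ p i) (k : Fin K) :
    (covMat h σ2 C p k).PosDef := by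
  unfold covMat
  refine Matrix.PosDef.posSemidef_add ((sum_posSemidef h p hp k).add ?_)
    (Matrix.PosDef.one.smul (by exact_mod_cast hσ))
  refine Matrix.PosSemidef.diagonal fun m => ?_
  have : 0 ≤ ((∑ i, p i * ‖h m i‖ ^ 2 + σ2) / ((2 : ℝ) ^ (C m) - 1) : ℝ) :=
    div_nonneg (add_nonneg (Finset.sum_nonneg fun i _ => mul_nonneg (hp i) (sq_nonneg _)) hσ.le)
      (eta_pos (hC m)).le
  exact Complex.zero_le_real.2 this

theorem covMat_sub {M K : ℕ} (h : Fin M → Fin K → ℂ) (σ2 : ℝ)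
    (C : Fin M → ℝ) (hC : ∀ m, 0 < C m) (p p' : Fin K → ℝ) (hpp' : ∀ i, p' i ≤ p i)
    (k : Fin K) : (covMat h σ2 C p k - covMat h σ2 C p' k).PosSemidef := by
  have e : covMat h σ2 C p k - covMat h σ2 C p' k =
      (∑ j ∈ univ.erase k, (((fun i => p i - p' i) j : ℝ) : ℂ) •
        Matrix.vecMulVec (chanVec h j) (star (chanVec h j)))
      + Matrix.diagonal fun m =>
        (((∑ i, (p i - p' i) * ‖h m i‖ ^ 2) / ((2 : ℝ) ^ (C m) - 1) : ℝ) : ℂ) := by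
    have e1 : (Matrix.diagonal fun m =>
        (((∑ i, (p i - p' i) * ‖h m i‖ ^ 2) / ((2 : ℝ) ^ (C m) - 1) : ℝ) : ℂ))
        = Qmat h σ2 C p - Qmat h σ2 C p' := by
      unfold Qmat
      rw [Matrix.diagonal_sub]
      congr 1
      funext m
      rw [← Complex.ofReal_sub, ← sub_div]
      congr 2
      simp only [sub_mul, Finset.sum_sub_distrib]
      ring
    rw [e1]
    unfold covMat
    simp only [Complex.ofReal_sub, sub_smul, Finset.sum_sub_distrib]
    abel
  rw [e]
  refine (sum_posSemidef h _ (fun i => sub_nonneg.2 (hpp' i)) k).add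
    (Matrix.PosSemidef.diagonal fun m => ?_)
  have : 0 ≤ ((∑ i, (p i - p' i) * ‖h m i‖ ^ 2) / ((2 : ℝ) ^ (C m) - 1) : ℝ) :=
    div_nonneg (Finset.sum_nonneg fun i _ => mul_nonneg (sub_nonneg.2 (hpp' i)) (sq_nonneg _))
      (eta_pos (hC m)).le
  exact Complex.zero_le_real.2 this

/-- **Monotonicity of the uplink interference function.** Under the C-RAN setup with
`h_k ≠ 0` and target rates `R_k > 0`, if `p ≥ p'` entrywise (both nonnegative), then
`Γ_k(p) ≥ Γ_k(p')` for every `k`. -/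
theorem gamma_monotone (M K : ℕ) (h : Fin M → Fin K → ℂ) (σ2 : ℝ) (hσ : 0 < σ2)
    (C : Fin M → ℝ) (hC : ∀ m, 0 < C m) (R : Fin K → ℝ) (hR : ∀ k, 0 < R k)
    (hh : ∀ k, chanVec h k ≠ 0)
    (p p' : Fin K → ℝ) (hp : ∀ i, 0 ≤ p i) (hp' : ∀ i, 0 ≤ p' i) (hpp' : ∀ i, p' i ≤ p i) :
    ∀ k, Gam h σ2 C R p' k ≤ Gam h σ2 C R p k := by
  intro k
  unfold Gam
  have hA := covMat_posDef h σ2 hσ C hC p' hp' k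
  have hB := covMat_posDef h σ2 hσ C hC p hp k
  have hS := posSemidef_inv_sub_inv hA (covMat_sub h σ2 C hC p p' hpp' k)
  rw [add_sub_cancel] at hS
  have h1 := (Complex.lt_def.1 (hB.inv.dotProduct_mulVec_pos (hh k))).1
  have h2 := (Complex.le_def.1 (hS.dotProduct_mulVec_nonneg (chanVec h k))).1
  rw [Matrix.sub_mulVec, dotProduct_sub, Complex.sub_re] at h2
  simp only [Complex.zero_re] at h1 h2
  exact div_le_div_of_nonneg_left (eta_pos (hR k)).le h1 (by linarith)

end CRAN
end
end

section
/- Equality of optimal sum powers in uplink and downlink power minimization: For any channel coefficients h_{m,k} ∈ ℂ, noise power σ² > 0, fronthaul capacities C_m > 0 and target rates R_k > 0, the infimum of the uplink sum power Σ_k p^ul_k over all uplink solutions (powers p^ul_k ≥ 0, unit-norm receive beamformers w_k, quantization noise levels q^ul_m > 0) satisfying R^ul_k ≥ R_k for all k and C^ul_m ≤ C_m for all m, equals the infimum of the downlink sum power Σ_k p^dl_k + Σ_m q^dl_m over all downlink solutions (powers p^dl_k ≥ 0, unit-norm transmit beamformers v_k, quantization noise levels q^dl_m > 0) satisfying R^dl_k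 ≥ R_k for all k and C^dl_m ≤ C_m for all m. (If one feasible set is empty, so is the other.) -/
open Finset

noncomputable section

namespace CRAN

variable {M K : ℕ}

/-- Uplink fronthaul rate
`C^ul_m = log₂((Σ_i p_i |h_{m,i}|² + q_m + σ²)/q_m)`. -/
def ulFronthaul (h : Fin M → Fin K → ℂ) (σ2 : ℝ) (p : Fin K → ℝ) (q : Fin M → ℝ)
    (m : Fin M) : ℝ :=
  Real.logb 2 ((∑ i, p i * ‖h m i‖ ^ 2 + q m + σ2) / q m)

/-- Uplink user rate `R^ul_k`. -/
def ulRate (h : Fin M → Fin K → ℂ) (σ2 : ℝ) (p : Fin K → ℝ) (w : Fin K → Fin M → ℂ)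
    (q : Fin M → ℝ) (k : Fin K) : ℝ :=
  Real.logb 2
    ((∑ i, p i * ‖∑ m, starRingEnd ℂ (w k m) * h m i‖ ^ 2
        + ∑ m, q m * ‖w k m‖ ^ 2 + σ2) /
     (∑ j ∈ univ.erase k, p j * ‖∑ m, starRingEnd ℂ (w k m) * h m j‖ ^ 2
        + ∑ m, q m * ‖w k m‖ ^ 2 + σ2))

/-- Downlink fronthaul rate
`C^dl_m = log₂((Σ_i p_i |v_{i,m}|² + q_m)/q_m)`. -/
def dlFronthaul (p : Fin K → ℝ) (v : Fin K → Fin M → ℂ) (q : Fin M → ℝ)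
    (m : Fin M) : ℝ :=
  Real.logb 2 ((∑ i, p i * ‖v i m‖ ^ 2 + q m) / q m)

/-- Downlink user rate `R^dl_k`. -/
def dlRate (h : Fin M → Fin K → ℂ) (σ2 : ℝ) (p : Fin K → ℝ) (v : Fin K → Fin M → ℂ)
    (q : Fin M → ℝ) (k : Fin K) : ℝ :=
  Real.logb 2
    ((∑ i, p i * ‖∑ m, starRingEnd ℂ (v i m) * h m k‖ ^ 2
        + ∑ m, q m * ‖h m k‖ ^ 2 + σ2) /
     (∑ j ∈ univ.erase k, p j * ‖∑ m, starRingEnd ℂ (v j m) * h m k‖ ^ 2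
        + ∑ m, q m * ‖h m k‖ ^ 2 + σ2))


/-- The set of achievable uplink sum powers for target rates `R` under fronthaul
capacities `C`. -/
def ulFeasPowers (h : Fin M → Fin K → ℂ) (σ2 : ℝ) (C : Fin M → ℝ) (R : Fin K → ℝ) :
    Set ℝ :=
  {P | ∃ (p : Fin K → ℝ) (w : Fin K → Fin M → ℂ) (q : Fin M → ℝ),
    (∀ k, 0 ≤ p k) ∧ (∀ k, ∑ m, ‖w k m‖ ^ 2 = 1) ∧ (∀ m, 0 < q m) ∧
    (∀ k, R k ≤ ulRate h σ2 p w q k) ∧ (∀ m, ulFronthaul h σ2 p q m ≤ C m) ∧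
    P = ∑ k, p k}

/-- The set of achievable downlink sum powers for target rates `R` under fronthaul
capacities `C`. -/
def dlFeasPowers (h : Fin M → Fin K → ℂ) (σ2 : ℝ) (C : Fin M → ℝ) (R : Fin K → ℝ) :
    Set ℝ :=
  {P | ∃ (p : Fin K → ℝ) (v : Fin K → Fin M → ℂ) (q : Fin M → ℝ),
    (∀ k, 0 ≤ p k) ∧ (∀ k, ∑ m, ‖v k m‖ ^ 2 = 1) ∧ (∀ m, 0 < q m) ∧
    (∀ k, R k ≤ dlRate h σ2 p v q k) ∧ (∀ m, dlFronthaul p v q m ≤ C m) ∧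
    P = ∑ k, p k + ∑ m, q m}


/-- A Z-matrix with a nonnegative vector mapped to a positive one is monotone. -/
lemma zmat_mono {n : Type*} [Fintype n] [DecidableEq n] (A : Matrix n n ℝ)
    (hA : ∀ i j, i ≠ j → A i j ≤ 0) (x : n → ℝ) (hx : ∀ i, 0 ≤ x i)
    (hAx : ∀ i, 0 < A.mulVec x i) (z : n → ℝ) (hz : ∀ i, 0 ≤ A.mulVec z i) :
    ∀ i, 0 ≤ z i := by
  have hxp : ∀ i, 0 < x i := by
    intro i
    rcases (hx i).lt_or_eq with h | h
    · exact h
    · exfalso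
      have h1 : A.mulVec x i ≤ 0 := by
        simp only [Matrix.mulVec, dotProduct]
        apply Finset.sum_nonpos
        intro j _
        by_cases hij : i = j
        · subst hij; simp [← h]
        · exact mul_nonpos_of_nonpos_of_nonneg (hA i j hij) (hx j)
      linarith [hAx i]
  intro i0
  by_contra hneg
  push Not at hneg
  obtain ⟨i, -, hi⟩ := Finset.exists_min_image Finset.univ (fun i => z i / x i) ⟨i0, Finset.mem_univ _⟩
  set t := z i / x i with ht
  have htneg : t < 0 := lt_of_le_of_lt (hi i0 (Finset.mem_univ _)) (div_neg_of_neg_of_pos hneg (hxp i0))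
  have h1 : A.mulVec z i ≤ t * A.mulVec x i := by
    simp only [Matrix.mulVec, dotProduct, Finset.mul_sum]
    apply Finset.sum_le_sum
    intro j _
    by_cases hij : i = j
    · subst hij
      have : z i = t * x i := by rw [ht]; field_simp [(hxp i).ne']
      rw [this]; apply le_of_eq; ring
    · have h2 : t * x j ≤ z j := by
        have := hi j (Finset.mem_univ _)
        rwa [le_div_iff₀ (hxp j)] at this
      nlinarith [hA i j hij]
  nlinarith [hz i, hAx i, mul_neg_of_neg_of_pos htneg (hAx i)]

lemma zmat_transpose_solve {n : Type*} [Fintype n] [DecidableEq n] (A : Matrix n n ℝ)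
    (hA : ∀ i j, i ≠ j → A i j ≤ 0) (x : n → ℝ) (hx : ∀ i, 0 ≤ x i)
    (hAx : ∀ i, 0 < A.mulVec x i) (b : n → ℝ) (hb : ∀ i, 0 ≤ b i) :
    ∃ y : n → ℝ, (∀ i, 0 ≤ y i) ∧ A.transpose.mulVec y = b := by
  have hmono := zmat_mono A hA x hx hAx
  have hinj : Function.Injective A.mulVec := by
    intro u v huv
    have h1 := hmono (u - v) (by intro i; rw [Matrix.mulVec_sub, huv]; simp)
    have h2 := hmono (v - u) (by intro i; rw [Matrix.mulVec_sub, huv]; simp)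
    funext i
    have := h1 i; have := h2 i
    simp only [Pi.sub_apply] at *
    linarith
  have hu : IsUnit A := Matrix.mulVec_injective_iff_isUnit.mp hinj
  have hdet : IsUnit A.det := (Matrix.isUnit_iff_isUnit_det A).mp hu
  have hinv : ∀ i j, 0 ≤ A⁻¹ i j := by
    intro i j
    have := hmono (A⁻¹.mulVec (Pi.single j 1)) (by
      intro k
      rw [Matrix.mulVec_mulVec, Matrix.mul_nonsing_inv A hdet, Matrix.one_mulVec]
      by_cases hk : k = j
      · subst hk; simp
      · simp [hk]) i
    simpa using this
  refine ⟨A⁻¹.transpose.mulVec b, ?_, ?_⟩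
  · intro i
    simp only [Matrix.mulVec, dotProduct, Matrix.transpose_apply]
    exact Finset.sum_nonneg fun j _ => mul_nonneg (hinv _ _) (hb j)
  · rw [Matrix.mulVec_mulVec, ← Matrix.transpose_mul, Matrix.nonsing_inv_mul A hdet]
    simp

lemma weak_id {n : Type*} [Fintype n] (A : Matrix n n ℝ) (x y : n → ℝ) :
    ∑ i, y i * A.mulVec x i = ∑ i, A.transpose.mulVec y i * x i := by
  have := Matrix.dotProduct_mulVec y A x
  rw [← Matrix.mulVec_transpose] at this
  exact this

lemma rate_iff {R S D N : ℝ} (hR : 0 < R) (hD : 0 < D) (hS : 0 ≤ S) (hN : N = S + D) :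
    R ≤ Real.logb 2 (N / D) ↔ D ≤ S / (2 ^ R - 1) := by
  have h2 : (1:ℝ) < 2 ^ R := Real.one_lt_rpow (by norm_num) hR
  rw [Real.le_logb_iff_rpow_le (by norm_num) (by rw [hN]; positivity), le_div_iff₀ hD,
    le_div_iff₀ (by linarith), hN]
  constructor <;> intro h <;> nlinarith

lemma front_iff {C S q N : ℝ} (hq : 0 < q) (hS : 0 ≤ S) (hN : N = S + q) :
    Real.logb 2 (N / q) ≤ C ↔ S ≤ (2 ^ C - 1) * q := by
  rw [Real.logb_le_iff_le_rpow (by norm_num) (by rw [hN]; positivity), div_le_iff₀ hq, hN]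
  constructor <;> intro h <;> nlinarith

/-- Coupling matrix. -/
def coup (h : Fin M → Fin K → ℂ) (C : Fin M → ℝ) (R : Fin K → ℝ) (w : Fin K → Fin M → ℂ) :
    Matrix (Fin K ⊕ Fin M) (Fin K ⊕ Fin M) ℝ := fun a b =>
  match a, b with
  | .inl k, .inl j => if j = k then ‖∑ m, starRingEnd ℂ (w k m) * h m k‖ ^ 2 / (2 ^ R k - 1)
      else -‖∑ m, starRingEnd ℂ (w k m) * h m j‖ ^ 2
  | .inl k, .inr m => -‖w k m‖ ^ 2
  | .inr m, .inl i => -‖h m i‖ ^ 2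
  | .inr m, .inr m' => if m' = m then 2 ^ C m - 1 else 0

lemma coup_off (h : Fin M → Fin K → ℂ) (C : Fin M → ℝ) (R : Fin K → ℝ)
    (w : Fin K → Fin M → ℂ) (a b : Fin K ⊕ Fin M) (hab : a ≠ b) : coup h C R w a b ≤ 0 := by
  rcases a with k | m <;> rcases b with j | m'
  · have : j ≠ k := fun e => hab (by rw [e])
    simp only [coup, this, if_false]
    exact neg_nonpos.mpr (by positivity)
  · exact neg_nonpos.mpr (by positivity)
  · exact neg_nonpos.mpr (by positivity)
  · have : m' ≠ m := fun e => hab (by rw [e])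
    simp [coup, this]

lemma coup_inl (h : Fin M → Fin K → ℂ) (C : Fin M → ℝ) (R : Fin K → ℝ)
    (w : Fin K → Fin M → ℂ) (x : Fin K ⊕ Fin M → ℝ) (k : Fin K) :
    (coup h C R w).mulVec x (.inl k) =
      x (.inl k) * ‖∑ m, starRingEnd ℂ (w k m) * h m k‖ ^ 2 / (2 ^ R k - 1)
      - ∑ j ∈ univ.erase k, x (.inl j) * ‖∑ m, starRingEnd ℂ (w k m) * h m j‖ ^ 2
      - ∑ m, x (.inr m) * ‖w k m‖ ^ 2 := by
  simp only [Matrix.mulVec, dotProduct, Fintype.sum_sum_type, coup]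
  rw [← Finset.add_sum_erase _ _ (Finset.mem_univ k)]
  rw [Finset.sum_congr rfl (g := fun j => -(x (.inl j) * ‖∑ m, starRingEnd ℂ (w k m) * h m j‖ ^ 2))]
  · simp only [if_true, Finset.sum_neg_distrib, neg_mul]
    simp only [mul_comm (‖w k _‖ ^ 2)]
    ring
  · intro j hj
    rw [if_neg (Finset.ne_of_mem_erase hj)]
    ring

lemma coup_inr (h : Fin M → Fin K → ℂ) (C : Fin M → ℝ) (R : Fin K → ℝ)
    (w : Fin K → Fin M → ℂ) (x : Fin K ⊕ Fin M → ℝ) (m : Fin M) :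
    (coup h C R w).mulVec x (.inr m) =
      (2 ^ C m - 1) * x (.inr m) - ∑ i, x (.inl i) * ‖h m i‖ ^ 2 := by
  simp only [Matrix.mulVec, dotProduct, Fintype.sum_sum_type, coup]
  simp only [neg_mul, Finset.sum_neg_distrib, ite_mul, zero_mul, Finset.sum_ite_eq',
    Finset.sum_ite_eq, Finset.mem_univ, if_true, mul_comm (‖h m _‖ ^ 2)]
  ring

lemma coupT_inl (h : Fin M → Fin K → ℂ) (C : Fin M → ℝ) (R : Fin K → ℝ)
    (w : Fin K → Fin M → ℂ) (x : Fin K ⊕ Fin M → ℝ) (k : Fin K) :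
    (coup h C R w).transpose.mulVec x (.inl k) =
      x (.inl k) * ‖∑ m, starRingEnd ℂ (w k m) * h m k‖ ^ 2 / (2 ^ R k - 1)
      - ∑ j ∈ univ.erase k, x (.inl j) * ‖∑ m, starRingEnd ℂ (w j m) * h m k‖ ^ 2
      - ∑ m, x (.inr m) * ‖h m k‖ ^ 2 := by
  simp only [Matrix.mulVec, dotProduct, Fintype.sum_sum_type, coup, Matrix.transpose_apply]
  rw [← Finset.add_sum_erase _ _ (Finset.mem_univ k)]
  rw [Finset.sum_congr rfl (g := fun j => -(x (.inl j) * ‖∑ m, starRingEnd ℂ (w j m) * h m k‖ ^ 2))]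
  · simp only [if_true, Finset.sum_neg_distrib, neg_mul]
    simp only [mul_comm (‖h _ k‖ ^ 2)]
    ring
  · intro j hj
    rw [if_neg (Finset.ne_of_mem_erase hj).symm]
    ring

lemma coupT_inr (h : Fin M → Fin K → ℂ) (C : Fin M → ℝ) (R : Fin K → ℝ)
    (w : Fin K → Fin M → ℂ) (x : Fin K ⊕ Fin M → ℝ) (m : Fin M) :
    (coup h C R w).transpose.mulVec x (.inr m) =
      (2 ^ C m - 1) * x (.inr m) - ∑ i, x (.inl i) * ‖w i m‖ ^ 2 := by
  simp only [Matrix.mulVec, dotProduct, Fintype.sum_sum_type, coup, Matrix.transpose_apply]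
  simp only [neg_mul, Finset.sum_neg_distrib, ite_mul, zero_mul, Finset.sum_ite_eq',
    Finset.sum_ite_eq, Finset.mem_univ, if_true, mul_comm (‖w _ m‖ ^ 2)]
  ring

lemma ul_iff (h : Fin M → Fin K → ℂ) (σ2 : ℝ) (hσ : 0 < σ2)
    (C : Fin M → ℝ) (R : Fin K → ℝ) (hR : ∀ k, 0 < R k)
    (w : Fin K → Fin M → ℂ) (x : Fin K ⊕ Fin M → ℝ) (hx : ∀ a, 0 ≤ x a)
    (hq : ∀ m, 0 < x (.inr m)) :
    ((∀ k, R k ≤ ulRate h σ2 (fun k => x (.inl k)) w (fun m => x (.inr m)) k) ∧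
      ∀ m, ulFronthaul h σ2 (fun k => x (.inl k)) (fun m => x (.inr m)) m ≤ C m) ↔
    ∀ a, σ2 ≤ (coup h C R w).mulVec x a := by
  rw [Sum.forall]
  apply and_congr
  · refine forall_congr' fun k => ?_
    rw [ulRate, coup_inl, rate_iff (S := x (.inl k) * ‖∑ m, starRingEnd ℂ (w k m) * h m k‖ ^ 2) (hR k)]
    · constructor <;> intro h <;> linarith
    · have : 0 ≤ ∑ j ∈ univ.erase k, x (.inl j) * ‖∑ m, starRingEnd ℂ (w k m) * h m j‖ ^ 2 :=
        Finset.sum_nonneg fun j _ => mul_nonneg (hx _) (by positivity)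
      have : 0 ≤ ∑ m, x (.inr m) * ‖w k m‖ ^ 2 :=
        Finset.sum_nonneg fun j _ => mul_nonneg (hx _) (by positivity)
      linarith
    · exact mul_nonneg (hx _) (by positivity)
    · rw [← Finset.add_sum_erase _ _ (Finset.mem_univ k)]; ring
  · refine forall_congr' fun m => ?_
    rw [ulFronthaul, coup_inr, front_iff (S := ∑ i, x (.inl i) * ‖h m i‖ ^ 2 + σ2) (hq m)]
    · constructor <;> intro h <;> linarith
    · have : 0 ≤ ∑ i, x (.inl i) * ‖h m i‖ ^ 2 :=
        Finset.sum_nonneg fun j _ => mul_nonneg (hx _) (by positivity)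
      linarith
    · ring

lemma dl_iff (h : Fin M → Fin K → ℂ) (σ2 : ℝ) (hσ : 0 < σ2)
    (C : Fin M → ℝ) (R : Fin K → ℝ) (hR : ∀ k, 0 < R k)
    (w : Fin K → Fin M → ℂ) (x : Fin K ⊕ Fin M → ℝ) (hx : ∀ a, 0 ≤ x a)
    (hq : ∀ m, 0 < x (.inr m)) :
    ((∀ k, R k ≤ dlRate h σ2 (fun k => x (.inl k)) w (fun m => x (.inr m)) k) ∧
      ∀ m, dlFronthaul (fun k => x (.inl k)) w (fun m => x (.inr m)) m ≤ C m) ↔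
    (∀ k, σ2 ≤ (coup h C R w).transpose.mulVec x (.inl k)) ∧
      ∀ m, 0 ≤ (coup h C R w).transpose.mulVec x (.inr m) := by
  apply and_congr
  · refine forall_congr' fun k => ?_
    rw [dlRate, coupT_inl, rate_iff (S := x (.inl k) * ‖∑ m, starRingEnd ℂ (w k m) * h m k‖ ^ 2) (hR k)]
    · constructor <;> intro h <;> linarith
    · have : 0 ≤ ∑ j ∈ univ.erase k, x (.inl j) * ‖∑ m, starRingEnd ℂ (w j m) * h m k‖ ^ 2 :=
        Finset.sum_nonneg fun j _ => mul_nonneg (hx _) (by positivity)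
      have : 0 ≤ ∑ m, x (.inr m) * ‖h m k‖ ^ 2 :=
        Finset.sum_nonneg fun j _ => mul_nonneg (hx _) (by positivity)
      linarith
    · exact mul_nonneg (hx _) (by positivity)
    · rw [← Finset.add_sum_erase _ _ (Finset.mem_univ k)]; ring
  · refine forall_congr' fun m => ?_
    rw [dlFronthaul, coupT_inr, front_iff (S := ∑ i, x (.inl i) * ‖w i m‖ ^ 2) (hq m)]
    · constructor <;> intro h <;> linarith
    · exact Finset.sum_nonneg fun j _ => mul_nonneg (hx _) (by positivity)
    · ring

lemma ul_to_dl (h : Fin M → Fin K → ℂ) (σ2 : ℝ) (hσ : 0 < σ2)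
    (C : Fin M → ℝ) (hC : ∀ m, 0 < C m) (R : Fin K → ℝ) (hR : ∀ k, 0 < R k)
    (P : ℝ) (hP : P ∈ ulFeasPowers h σ2 C R) (δ : ℝ) (hδ : 0 < δ) :
    ∃ P' ∈ dlFeasPowers h σ2 C R, P' ≤ P + δ := by
  obtain ⟨p, w, q, hp, hw, hq, hr, hf, rfl⟩ := hP
  set x : Fin K ⊕ Fin M → ℝ := Sum.elim p q with hxdef
  have hx : ∀ a, 0 ≤ x a := by
    rintro (k | m)
    · exact hp k
    · exact (hq m).le
  have hA := (ul_iff h σ2 hσ C R hR w x hx hq).mp ⟨hr, hf⟩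
  have hT : 0 ≤ ∑ a, x a := Finset.sum_nonneg fun a _ => hx a
  obtain ⟨ε, hε, hεT⟩ : ∃ ε > 0, ε * ∑ a, x a ≤ δ * σ2 := by
    refine ⟨δ * σ2 / (∑ a, x a + 1), by positivity, ?_⟩
    rw [div_mul_eq_mul_div, div_le_iff₀ (by positivity)]
    have : 0 < δ * σ2 := by positivity
    nlinarith
  obtain ⟨y, hy, hyA⟩ := zmat_transpose_solve (coup h C R w) (coup_off h C R w) x hx
    (fun a => lt_of_lt_of_le hσ (hA a)) (Sum.elim (fun _ => σ2 + ε) (fun _ => ε))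
    (by rintro (k | m) <;> simp <;> linarith)
  have hyq : ∀ m, 0 < y (.inr m) := by
    intro m
    have h1 := coupT_inr h C R w y m
    rw [hyA] at h1
    simp only [Sum.elim_inr] at h1
    have h2 : 0 ≤ ∑ i, y (.inl i) * ‖w i m‖ ^ 2 :=
      Finset.sum_nonneg fun j _ => mul_nonneg (hy _) (by positivity)
    have h3 : (1:ℝ) < 2 ^ C m := Real.one_lt_rpow (by norm_num) (hC m)
    have h4 : 0 < (2 ^ C m - 1) * y (.inr m) := by linarith
    exact pos_of_mul_pos_right h4 (by linarith)
  have hfe := (dl_iff h σ2 hσ C R hR w y hy hyq).mpr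
    ⟨fun k => by rw [hyA]; simp; linarith, fun m => by rw [hyA]; simp; linarith⟩
  refine ⟨_, ⟨_, w, _, fun k => hy (.inl k), hw, hyq, hfe.1, hfe.2, rfl⟩, ?_⟩
  have hid := weak_id (coup h C R w) x y
  have h1 : σ2 * (∑ k, y (.inl k) + ∑ m, y (.inr m)) ≤ ∑ i, y i * (coup h C R w).mulVec x i := by
    rw [← Fintype.sum_sum_type, Finset.mul_sum]
    refine Finset.sum_le_sum fun a _ => ?_
    nlinarith [hy a, hA a]
  have h2 : ∑ i, (coup h C R w).transpose.mulVec y i * x i = σ2 * ∑ k, p k + ε * ∑ a, x a := by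
    rw [hyA]
    simp only [Fintype.sum_sum_type, hxdef, Sum.elim_inl, Sum.elim_inr, ← Finset.mul_sum]
    ring
  have h3 : σ2 * (∑ k, y (.inl k) + ∑ m, y (.inr m)) ≤ σ2 * (∑ k, p k + δ) := by linarith
  exact le_of_mul_le_mul_left h3 hσ

lemma dl_to_ul (h : Fin M → Fin K → ℂ) (σ2 : ℝ) (hσ : 0 < σ2)
    (C : Fin M → ℝ) (hC : ∀ m, 0 < C m) (R : Fin K → ℝ) (hR : ∀ k, 0 < R k)
    (P : ℝ) (hP : P ∈ dlFeasPowers h σ2 C R) :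
    ∃ P' ∈ ulFeasPowers h σ2 C R, P' ≤ P := by
  obtain ⟨p, w, q, hp, hw, hq, hr, hf, rfl⟩ := hP
  set y : Fin K ⊕ Fin M → ℝ := Sum.elim p q with hydef
  have hy : ∀ a, 0 ≤ y a := by
    rintro (k | m)
    · exact hp k
    · exact (hq m).le
  obtain ⟨hA1, hA2⟩ := (dl_iff h σ2 hσ C R hR w y hy hq).mp ⟨hr, hf⟩
  have hc : ∀ m, (0:ℝ) < 2 ^ C m - 1 := fun m => by
    have h3 : (1:ℝ) < 2 ^ C m := Real.one_lt_rpow (by norm_num) (hC m)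
    linarith
  have hs : ∀ k, 0 ≤ ∑ m, q m * ‖h m k‖ ^ 2 := fun k =>
    Finset.sum_nonneg fun j _ => mul_nonneg (hq _).le (by positivity)
  have hS : 0 ≤ ∑ k, ∑ m, q m * ‖h m k‖ ^ 2 := Finset.sum_nonneg fun k _ => hs k
  obtain ⟨ε, hε, hεT⟩ : ∃ ε > 0, ε * ∑ k, ∑ m, q m * ‖h m k‖ ^ 2 < σ2 := by
    refine ⟨σ2 / (∑ k, ∑ m, q m * ‖h m k‖ ^ 2 + 1), by positivity, ?_⟩
    rw [div_mul_eq_mul_div, div_lt_iff₀ (by positivity)]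
    nlinarith
  have hεk : ∀ k, ε * ∑ m, q m * ‖h m k‖ ^ 2 < σ2 := fun k => by
    have := Finset.single_le_sum (f := fun k => ∑ m, q m * ‖h m k‖ ^ 2)
      (fun k _ => hs k) (Finset.mem_univ k)
    nlinarith
  have hpos : ∀ a, 0 < (coup h C R w).transpose.mulVec
      (Sum.elim p (fun m => (1 + ε) * q m)) a := by
    rintro (k | m)
    · have h1 := hA1 k
      rw [coupT_inl] at h1 ⊢
      simp only [hydef, Sum.elim_inl, Sum.elim_inr] at h1 ⊢
      have h2 : ∑ m, (1 + ε) * q m * ‖h m k‖ ^ 2 = (1 + ε) * ∑ m, q m * ‖h m k‖ ^ 2 := by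
        rw [Finset.mul_sum]; exact Finset.sum_congr rfl fun _ _ => by ring
      rw [h2]
      have := hεk k
      linarith
    · have h1 := hA2 m
      rw [coupT_inr] at h1 ⊢
      simp only [hydef, Sum.elim_inl, Sum.elim_inr] at h1 ⊢
      have := mul_pos hε (mul_pos (hc m) (hq m))
      linarith
  obtain ⟨x, hx, hxA⟩ := zmat_transpose_solve (coup h C R w).transpose
    (fun a b hab => coup_off h C R w b a hab.symm) _
    (by
      rintro (k | m)
      · exact hp k
      · exact mul_nonneg (by linarith) (hq m).le) hpos (fun _ => σ2) (fun _ => hσ.le)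
  rw [Matrix.transpose_transpose] at hxA
  have hxq : ∀ m, 0 < x (.inr m) := by
    intro m
    have h1 := coup_inr h C R w x m
    rw [hxA] at h1
    have h2 : 0 ≤ ∑ i, x (.inl i) * ‖h m i‖ ^ 2 :=
      Finset.sum_nonneg fun j _ => mul_nonneg (hx _) (by positivity)
    have h4 : 0 < (2 ^ C m - 1) * x (.inr m) := by linarith
    exact pos_of_mul_pos_right h4 (hc m).le
  have hfe := (ul_iff h σ2 hσ C R hR w x hx hxq).mpr (fun a => by rw [hxA])
  refine ⟨_, ⟨_, w, _, fun k => hx (.inl k), hw, hxq, hfe.1, hfe.2, rfl⟩, ?_⟩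
  have hid := weak_id (coup h C R w) x y
  have h1 : ∑ i, y i * (coup h C R w).mulVec x i = σ2 * (∑ k, p k + ∑ m, q m) := by
    rw [hxA]
    simp only [Fintype.sum_sum_type, hydef, Sum.elim_inl, Sum.elim_inr, ← Finset.sum_mul]
    ring
  have h2 : σ2 * ∑ k, x (.inl k) ≤ ∑ i, (coup h C R w).transpose.mulVec y i * x i := by
    rw [Fintype.sum_sum_type, Finset.mul_sum]
    have h3 : ∑ k, σ2 * x (.inl k) ≤
        ∑ k, (coup h C R w).transpose.mulVec y (.inl k) * x (.inl k) :=
      Finset.sum_le_sum fun k _ => mul_le_mul_of_nonneg_right (hA1 k) (hx _)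
    have h4 : 0 ≤ ∑ m, (coup h C R w).transpose.mulVec y (.inr m) * x (.inr m) :=
      Finset.sum_nonneg fun m _ => mul_nonneg (hA2 m) (hx _)
    linarith
  exact le_of_mul_le_mul_left (by linarith) hσ

/-- **Equality of optimal sum powers in uplink and downlink power minimization.**
For any channels, noise power `σ² > 0`, fronthaul capacities `C_m > 0` and target
rates `R_k > 0`, the infimum of the uplink sum power over all feasible uplink
solutions equals the infimum of the downlink sum power over all feasible downlink
solutions; moreover one feasible set is empty iff the other is. -/
theorem power_minimization_duality (M K : ℕ)
    (h : Fin M → Fin K → ℂ) (σ2 : ℝ) (hσ : 0 < σ2)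
    (C : Fin M → ℝ) (hC : ∀ m, 0 < C m) (R : Fin K → ℝ) (hR : ∀ k, 0 < R k) :
    sInf (ulFeasPowers h σ2 C R) = sInf (dlFeasPowers h σ2 C R) ∧
    (ulFeasPowers h σ2 C R = ∅ ↔ dlFeasPowers h σ2 C R = ∅) := by
  have h1 := ul_to_dl h σ2 hσ C hC R hR
  have h2 := dl_to_ul h σ2 hσ C hC R hR
  have hemp : ulFeasPowers h σ2 C R = ∅ ↔ dlFeasPowers h σ2 C R = ∅ := by
    simp only [Set.eq_empty_iff_forall_notMem]
    constructor
    · intro he P hP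
      obtain ⟨P', hP', -⟩ := h2 P hP
      exact he P' hP'
    · intro he P hP
      obtain ⟨P', hP', -⟩ := h1 P hP 1 one_pos
      exact he P' hP'
  refine ⟨?_, hemp⟩
  by_cases hu : ulFeasPowers h σ2 C R = ∅
  · rw [hu, hemp.mp hu]
  have hd : dlFeasPowers h σ2 C R ≠ ∅ := fun e => hu (hemp.mpr e)
  have hune := Set.nonempty_iff_ne_empty.mpr hu
  have hdne := Set.nonempty_iff_ne_empty.mpr hd
  have bu : BddBelow (ulFeasPowers h σ2 C R) := by
    refine ⟨0, ?_⟩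
    rintro P ⟨p, w, q, hp, -, -, -, -, rfl⟩
    exact Finset.sum_nonneg fun k _ => hp k
  have bd : BddBelow (dlFeasPowers h σ2 C R) := by
    refine ⟨0, ?_⟩
    rintro P ⟨p, w, q, hp, -, hq, -, -, rfl⟩
    exact add_nonneg (Finset.sum_nonneg fun k _ => hp k) (Finset.sum_nonneg fun m _ => (hq m).le)
  apply le_antisymm
  · refine le_csInf hdne fun P hP => ?_
    obtain ⟨P', hP', hle⟩ := h2 P hP
    exact (csInf_le bu hP').trans hle
  · refine le_csInf hune fun P hP => ?_
    refine le_of_forall_pos_le_add fun δ hδ => ?_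
    obtain ⟨P', hP', hle⟩ := h1 P hP δ hδ
    exact (csInf_le bd hP').trans hle

end CRAN
end
end
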